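/- arXiv:2104.06566 — 2 statements merged into one kernel-verified Lean document; each statement's English description precedes it below -/
import Mathlib

section
/- Let v₀ > 0 and let v : [0,T] → ℝ solve the scattering-free two-photon Riccati equation with initial value v₀. Then v(s) > 0 for every s ∈ [0,T], and for every s ∈ [0,T] the identity μ(s)/v(s) = 1/v₀ + ∫₀^{s} μ(t)·σ_b(t) dt holds. -/
/-! The Riccati equation is linear in `v` once its own coefficient is frozen:
`v' = -(σa + σb v) v`. Hence `exp (∫₀ˢ (σa + σb v)) * v s` is constant, equal to `v0`
(`integratingFactor_mul_eq`), which gives positivity of `v` with no continuation argument.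
Once `v ≠ 0`, the quotient rule gives `(μ / v)' = μ σb`, so `μ / v - ∫₀ˢ μ σb` is constant
on `[0,T]` and equals its value `1 / v0` at `0`. -/

/-- The fundamental theorem of calculus relative to `[0,T]`, including the endpoints. -/
lemma hasDerivWithinAt_integral_Icc {T : ℝ} {c : ℝ → ℝ} (hc : ContinuousOn c (Set.Icc 0 T))
    {s : ℝ} (hs : s ∈ Set.Icc (0 : ℝ) T) :
    HasDerivWithinAt (fun x => ∫ r in (0 : ℝ)..x, c r) (c s) (Set.Icc 0 T) s := by
  have : Fact (s ∈ Set.Icc (0 : ℝ) T) := ⟨hs⟩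
  refine intervalIntegral.integral_hasDerivWithinAt_right ?_ ?_ (hc s hs)
  · exact (hc.mono (Set.Icc_subset_Icc_right hs.2)).intervalIntegrable_of_Icc hs.1
  · exact hc.stronglyMeasurableAtFilter_nhdsWithin measurableSet_Icc s

lemma eq_initial_of_hasDerivWithinAt_zero {T : ℝ} {f : ℝ → ℝ}
    (hf : ∀ s ∈ Set.Icc (0 : ℝ) T, HasDerivWithinAt f 0 (Set.Icc 0 T) s) :
    ∀ s ∈ Set.Icc (0 : ℝ) T, f s = f 0 :=
  constant_of_has_deriv_right_zero (fun s hs => (hf s hs).continuousWithinAt)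
    fun s hs => (hf s (Set.Ico_subset_Icc_self hs)).mono_of_mem_nhdsWithin
      (Icc_mem_nhdsGE_of_mem hs)

/-- The integrating factor for the linear equation `v' = -c v`. -/
lemma integratingFactor_mul_eq {T : ℝ} {c v : ℝ → ℝ} (hc : ContinuousOn c (Set.Icc 0 T))
    (hv : ∀ s ∈ Set.Icc (0 : ℝ) T, HasDerivWithinAt v (-(c s * v s)) (Set.Icc 0 T) s) :
    ∀ s ∈ Set.Icc (0 : ℝ) T, Real.exp (∫ r in (0 : ℝ)..s, c r) * v s = v 0 := by
  intro s hs
  have h := eq_initial_of_hasDerivWithinAt_zero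
    (f := fun s => Real.exp (∫ r in (0 : ℝ)..s, c r) * v s) (T := T) (fun x hx => by
      refine ((hasDerivWithinAt_integral_Icc hc hx).exp.mul (hv x hx)).congr_deriv ?_
      ring) s hs
  simpa using h


open Set

/-- `v` solves the scattering-free two-photon Riccati equation
`v' = -σa v - σb v²` on `[0,T]` with initial value `v₀`
(derivative taken within `[0,T]`, i.e. one-sided at the endpoints). -/
def SolvesRiccati (σa σb : ℝ → ℝ) (T : ℝ) (v : ℝ → ℝ) (v0 : ℝ) : Prop :=
  (∀ s ∈ Set.Icc (0 : ℝ) T,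
      HasDerivWithinAt v (-(σa s * v s) - σb s * (v s) ^ 2) (Set.Icc 0 T) s) ∧
    v 0 = v0


theorem stmt5
    (T : ℝ) (hT : 0 < T)
    (σa σb : ℝ → ℝ)
    (hσa_cont : ContinuousOn σa (Set.Icc 0 T))
    (hσb_cont : ContinuousOn σb (Set.Icc 0 T))
    (hσa_nonneg : ∀ t ∈ Set.Icc (0 : ℝ) T, 0 ≤ σa t)
    (hσb_nonneg : ∀ t ∈ Set.Icc (0 : ℝ) T, 0 ≤ σb t)
    (μ : ℝ → ℝ) (hμ : ∀ t, μ t = Real.exp (-∫ r in (0 : ℝ)..t, σa r))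
    (v0 : ℝ) (hv0 : 0 < v0)
    (v : ℝ → ℝ) (hv : SolvesRiccati σa σb T v v0) :
    (∀ s ∈ Set.Icc (0 : ℝ) T, 0 < v s) ∧
    ∀ s ∈ Set.Icc (0 : ℝ) T,
      μ s / v s = 1 / v0 + ∫ t in (0 : ℝ)..s, μ t * σb t := by
  obtain ⟨hd, h0⟩ := hv
  have hvc : ContinuousOn v (Set.Icc 0 T) := fun s hs => (hd s hs).continuousWithinAt
  have hpos : ∀ s ∈ Set.Icc (0 : ℝ) T, 0 < v s := by
    intro s hs
    have h := integratingFactor_mul_eq (c := fun r => σa r + σb r * v r) (v := v)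
      (hσa_cont.add (hσb_cont.mul hvc))
      (fun x hx => by convert hd x hx using 1; ring) s hs
    rw [h0] at h
    exact pos_of_mul_pos_right (h ▸ hv0) (Real.exp_pos _).le
  refine ⟨hpos, fun s hs => ?_⟩
  have hμd : ∀ x ∈ Set.Icc (0 : ℝ) T,
      HasDerivWithinAt μ (μ x * -σa x) (Set.Icc 0 T) x := by
    intro x hx
    obtain rfl : μ = fun t => Real.exp (-∫ r in (0 : ℝ)..t, σa r) := funext hμ
    exact (hasDerivWithinAt_integral_Icc hσa_cont hx).neg.exp
  have hμc : ContinuousOn μ (Set.Icc 0 T) := fun x hx => (hμd x hx).continuousWithinAt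
  have hμ0 : μ 0 = 1 := by simp [hμ]
  have h := eq_initial_of_hasDerivWithinAt_zero
    (f := fun s => μ s / v s - ∫ t in (0 : ℝ)..s, μ t * σb t) (T := T) (fun x hx => by
      have hne := (hpos x hx).ne'
      refine (((hμd x hx).div (hd x hx) hne).sub
        (hasDerivWithinAt_integral_Icc (hμc.mul hσb_cont) hx)).congr_deriv ?_
      rw [Pi.mul_apply]
      field_simp
      ring) s hs
  simp only [intervalIntegral.integral_same, sub_zero, hμ0, h0] at h
  linarith
end

section
/- Let σ_a, σ_b and σ̃_a, σ̃_b be two pairs of continuous nonnegative functions on [0,T], with attenuations μ(t) = exp(−∫₀ᵗ σ_a) and μ̃(t) = exp(−∫₀ᵗ σ̃_a). Let c₁ > c₂ > 0, and for j = 1, 2 let v_j solve v_j' = −σ_a·v_j − σ_b·v_j², v_j(0) = c_j, and let ṽ_j solve ṽ_j' = −σ̃_a·ṽ_j − σ̃_b·ṽ_j², ṽ_j(0) = c_j, all on [0,T]. If the exit measurements agree, v₁(T) = ṽ₁(T) and v₂(T) = ṽ₂(T), then ∫₀^{T} σ_a(r) dr = ∫₀^{T} σ̃_a(r) dr and ∫₀^{T}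 μ(t)·σ_b(t) dt = ∫₀^{T} μ̃(t)·σ̃_b(t) dt. That is, two boundary measurements with distinct positive collimated sources uniquely determine both the X-ray transform of σ_a and the attenuated X-ray transform of σ_b along the line (the scattering-free uniqueness theorem restricted to a single line). -/
/-!
Write `μ t = exp (-∫₀ᵗ σa)` and `B t = ∫₀ᵗ μ σb`. The Riccati equation is linearised by `1 / v`,
which gives the exit formula `v T * (1 + c * B T) = c * μ T`. It is derived here without dividing
by `v`: the defect `g = v * (1 + c * B) - c * μ` satisfies the linear equation
`g' = -(σa + σb v) g` with `g 0 = 0`, so it vanishes identically (`riccati_formula`).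

Since `μ T > 0`, the exit values are nonzero, and the two formulas for
`c₁ ≠ c₂` form a nonsingular linear system for `(μ T, B T)`; equal measurements therefore force
equal `μ T` and equal `B T` (`exit_system_injective`).
-/

open Set

/-- The fundamental theorem of calculus with one-sided derivatives at the endpoints. -/
lemma hasDerivWithinAt_primitive {f : ℝ → ℝ} {T : ℝ} (hf : ContinuousOn f (Set.Icc 0 T))
    {s : ℝ} (hs : s ∈ Set.Icc (0 : ℝ) T) :
    HasDerivWithinAt (fun x => ∫ r in (0 : ℝ)..x, f r) (f s) (Set.Icc 0 T) s := by
  have : Fact (s ∈ Set.Icc (0 : ℝ) T) := ⟨hs⟩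
  refine intervalIntegral.integral_hasDerivWithinAt_right ?_
    (hf.stronglyMeasurableAtFilter_nhdsWithin measurableSet_Icc s) (hf s hs)
  exact (hf.mono (Set.Icc_subset_Icc_right hs.2)).intervalIntegrable_of_Icc hs.1

/-- Uniqueness for a homogeneous linear equation, by the integrating factor `exp (∫ k)`. -/
lemma eq_zero_of_linear {g k : ℝ → ℝ} {T : ℝ} (hk : ContinuousOn k (Set.Icc 0 T))
    (hg : ∀ s ∈ Set.Icc (0 : ℝ) T, HasDerivWithinAt g (-(k s * g s)) (Set.Icc 0 T) s)
    (h0 : g 0 = 0) {s : ℝ} (hs : s ∈ Set.Icc (0 : ℝ) T) : g s = 0 := by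
  have hd : ∀ x ∈ Set.Icc (0 : ℝ) T,
      HasDerivWithinAt (fun x => g x * Real.exp (∫ r in (0 : ℝ)..x, k r)) 0 (Set.Icc 0 T) x := by
    intro x hx
    refine ((hg x hx).mul (hasDerivWithinAt_primitive hk hx).exp).congr_deriv ?_
    ring
  have h := constant_of_has_deriv_right_zero (fun x hx => (hd x hx).continuousWithinAt)
    (fun x hx => (hd x (Set.Ico_subset_Icc_self hx)).mono_of_mem_nhdsWithin
      (Icc_mem_nhdsGE_of_mem hx)) s hs
  simpa [h0] using h

/-- The division-free exit formula for the Riccati equation. -/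
lemma riccati_formula {σa σb μ v : ℝ → ℝ} {T c : ℝ} (hT : 0 < T)
    (ha : ContinuousOn σa (Set.Icc 0 T)) (hb : ContinuousOn σb (Set.Icc 0 T))
    (hμ : ∀ t, μ t = Real.exp (-∫ r in (0 : ℝ)..t, σa r))
    (hv : SolvesRiccati σa σb T v c) :
    v T * (1 + c * ∫ t in (0 : ℝ)..T, μ t * σb t) = c * μ T := by
  obtain ⟨hv, hv0⟩ := hv
  have hμd : ∀ s ∈ Set.Icc (0 : ℝ) T,
      HasDerivWithinAt μ (-(σa s * μ s)) (Set.Icc 0 T) s := by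
    intro s hs
    have h := (hasDerivWithinAt_primitive ha hs).neg.exp
    rw [funext hμ]
    refine h.congr_deriv ?_
    simp only [Pi.neg_apply]
    ring
  have hμc : ContinuousOn μ (Set.Icc 0 T) := fun s hs => (hμd s hs).continuousWithinAt
  have hvc : ContinuousOn v (Set.Icc 0 T) := fun s hs => (hv s hs).continuousWithinAt
  have key := eq_zero_of_linear (T := T)
    (g := fun x => v x * (1 + c * ∫ t in (0 : ℝ)..x, μ t * σb t) - c * μ x)
    (k := fun x => σa x + σb x * v x) (ha.add (hb.mul hvc)) ?_ ?_ (Set.right_mem_Icc.2 hT.le)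
  · exact sub_eq_zero.1 key
  · intro s hs
    refine (((hv s hs).mul (((hasDerivWithinAt_primitive (hμc.mul hb) hs).const_mul c).const_add
      1)).sub ((hμd s hs).const_mul c)).congr_deriv ?_
    simp only [Pi.mul_apply]
    ring
  · simp [hv0, hμ]

/-- Two exit values for distinct positive sources determine the attenuation `m` and the
attenuated integral `B`. -/
lemma exit_system_injective {c1 c2 x1 x2 m m' B B' : ℝ} (hc2 : 0 < c2) (hc12 : c2 < c1)
    (hm : 0 < m)
    (h1 : x1 * (1 + c1 * B) = c1 * m) (h2 : x2 * (1 + c2 * B) = c2 * m)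
    (h1' : x1 * (1 + c1 * B') = c1 * m') (h2' : x2 * (1 + c2 * B') = c2 * m') :
    m = m' ∧ B = B' := by
  have hc1 : 0 < c1 := hc2.trans hc12
  have e1 : x1 * (B - B') = m - m' :=
    mul_left_cancel₀ hc1.ne' (by linear_combination h1 - h1')
  have e2 : x2 * (B - B') = m - m' :=
    mul_left_cancel₀ hc2.ne' (by linear_combination h2 - h2')
  have hx1 : x1 ≠ 0 := by
    rintro rfl
    have : 0 < c1 * m := mul_pos hc1 hm
    linarith
  have hx : x1 - x2 ≠ 0 := by
    intro h
    -- With a common exit value `x`, eliminating `m` leaves `x * (c2 - c1) = 0`.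
    have h3 : x1 * (c2 - c1) = 0 := by
      linear_combination c2 * h1 - c1 * h2 - c1 * (1 + c2 * B) * h
    rcases mul_eq_zero.1 h3 with h4 | h4
    · exact hx1 h4
    · linarith
  have hBB : B - B' = 0 := by
    have : (x1 - x2) * (B - B') = 0 := by linear_combination e1 - e2
    exact (mul_eq_zero.1 this).resolve_left hx
  rw [hBB] at e1
  constructor <;> linarith

theorem stmt14
    (T : ℝ) (hT : 0 < T)
    (σa σb σa' σb' : ℝ → ℝ)
    (hσa_cont : ContinuousOn σa (Set.Icc 0 T))
    (hσb_cont : ContinuousOn σb (Set.Icc 0 T))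
    (hσa'_cont : ContinuousOn σa' (Set.Icc 0 T))
    (hσb'_cont : ContinuousOn σb' (Set.Icc 0 T))
    (hσa_nonneg : ∀ t ∈ Set.Icc (0 : ℝ) T, 0 ≤ σa t)
    (hσb_nonneg : ∀ t ∈ Set.Icc (0 : ℝ) T, 0 ≤ σb t)
    (hσa'_nonneg : ∀ t ∈ Set.Icc (0 : ℝ) T, 0 ≤ σa' t)
    (hσb'_nonneg : ∀ t ∈ Set.Icc (0 : ℝ) T, 0 ≤ σb' t)
    (μ μ' : ℝ → ℝ)
    (hμ : ∀ t, μ t = Real.exp (-∫ r in (0 : ℝ)..t, σa r))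
    (hμ' : ∀ t, μ' t = Real.exp (-∫ r in (0 : ℝ)..t, σa' r))
    (c1 c2 : ℝ) (hc2 : 0 < c2) (hc12 : c2 < c1)
    (v1 v2 w1 w2 : ℝ → ℝ)
    (hv1 : SolvesRiccati σa σb T v1 c1) (hv2 : SolvesRiccati σa σb T v2 c2)
    (hw1 : SolvesRiccati σa' σb' T w1 c1) (hw2 : SolvesRiccati σa' σb' T w2 c2)
    (hmeas1 : v1 T = w1 T) (hmeas2 : v2 T = w2 T) :
    (∫ r in (0 : ℝ)..T, σa r) = (∫ r in (0 : ℝ)..T, σa' r) ∧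
    (∫ t in (0 : ℝ)..T, μ t * σb t) = (∫ t in (0 : ℝ)..T, μ' t * σb' t) := by
  have f1 := riccati_formula hT hσa_cont hσb_cont hμ hv1
  have f2 := riccati_formula hT hσa_cont hσb_cont hμ hv2
  have f1' := riccati_formula hT hσa'_cont hσb'_cont hμ' hw1
  have f2' := riccati_formula hT hσa'_cont hσb'_cont hμ' hw2
  rw [← hmeas1] at f1'
  rw [← hmeas2] at f2'
  have hm : 0 < μ T := by rw [hμ]; positivity
  obtain ⟨hmm, hBB⟩ := exit_system_injective hc2 hc12 hm f1 f2 f1' f2'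
  refine ⟨?_, hBB⟩
  rw [hμ, hμ'] at hmm
  exact neg_injective (Real.exp_injective hmm)
end
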